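/- Suppose the sequence (f_i) satisfies d(s) = 0 for every s ∈ (0,∞), where d(s) := lim_{n→∞} h_n(θ, h_0(s))/h_n(θ, s). Then for every s ∈ (0,∞), the interval [h_0(s), s] contains at least one point s_r that is regular for the shifted sequence (f_{1+i})_{i≥0}. -/

import Mathlib

open MeasureTheory Filter Topology Set
open scoped ENNReal

noncomputable section

/-- `f` is the probability generating function `f(x) = ∑_{j≥1} p_j x^j` of a probability
distribution on the positive integers with `p 1 ≠ 1`. -/
def IsPGF (f : ℝ → ℝ) : Prop :=
  ∃ p : ℕ → ℝ, (∀ j, 0 ≤ p j) ∧ p 0 = 0 ∧ p 1 ≠ 1 ∧ HasSum p 1 ∧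
    ∀ x ∈ Set.Icc (0 : ℝ) 1, HasSum (fun j => p j * x ^ j) (f x)

/-- `g` is the inverse of `f` on `[0,1]`. -/
def IsInvOn01 (g f : ℝ → ℝ) : Prop :=
  ∀ x ∈ Set.Icc (0 : ℝ) 1, g (f x) = x ∧ f (g x) = x ∧ g x ∈ Set.Icc (0 : ℝ) 1

/-- `h(s) = -log f⁻¹(e^{-s})`, expressed through the inverse `g = f⁻¹`. -/
def hfun (g : ℝ → ℝ) (s : ℝ) : ℝ := - Real.log (g (Real.exp (-s)))

/-- `h_n(s) = h_{n-1}(⋯(h_0(s))⋯)`, built from the sequence `g i = f_i⁻¹` of inverses. -/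
def hIter (g : ℕ → ℝ → ℝ) : ℕ → ℝ → ℝ
  | 0, s => s
  | n + 1, s => hfun (g (n : ℕ)) (hIter g n s)

/-- `(Z n)` is a branching process in the fixed environment given by the pgfs `f n`:
`Z 0 = 1`, each `Z n` is a positive-integer valued `F n`-measurable variable, and
`E[t ^ Z (n+1) | F n] = (f n t) ^ Z n` a.s. for every `t ∈ [0,1]`. -/
def IsBranchingProcess {Ω : Type*} {mΩ : MeasurableSpace Ω} (μ : Measure Ω)
    (F : Filtration ℕ mΩ) (f : ℕ → ℝ → ℝ) (Z : ℕ → Ω → ℕ) : Prop :=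
  (∀ ω, Z 0 ω = 1) ∧ (∀ n ω, 1 ≤ Z n ω) ∧ (∀ n, Measurable[F n] (Z n)) ∧
    ∀ n, ∀ t ∈ Set.Icc (0 : ℝ) 1,
      (μ[fun ω => t ^ Z (n + 1) ω | F n]) =ᵐ[μ] fun ω => f n t ^ Z n ω

/-- `exp(-w)` for `w ∈ [0,∞]`, with the convention `exp(-∞) = 0`. -/
def expNeg (w : ℝ≥0∞) : ℝ := if w = ∞ then 0 else Real.exp (-w.toReal)

/-- `s ∈ (0,∞)` is a regular point (analytic definition):
`h_n(t)/h_n(s) → 0` for every `0 < t < s`. -/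
def AnalyticRegular (g : ℕ → ℝ → ℝ) (s : ℝ) : Prop :=
  ∀ t, 0 < t → t < s → Tendsto (fun n => hIter g n t / hIter g n s) atTop (𝓝 0)

/-- `U` is slowly varying at infinity. -/
def SlowlyVarying (U : ℝ → ℝ) : Prop :=
  ∀ lam : ℝ, 0 < lam → Tendsto (fun x => U (lam * x) / U x) atTop (𝓝 1)

/-- Generalized inverse `V(x) = inf{y ≥ 0 : U(y) ≥ x}`. -/
def Vfun (U : ℝ → ℝ) (x : ℝ) : ℝ := sInf {y : ℝ | 0 ≤ y ∧ x ≤ U y}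

/-- Generalized inverse `G(x) = inf{y ≥ 0 : F(y) ≥ x}` of a distribution function. -/
def Gfun (F : ℝ → ℝ) (x : ℝ) : ℝ := sInf {y : ℝ | 0 ≤ y ∧ x ≤ F y}

/-- `Q(x) = f'(x)(1-x)/(1-f(x))`. -/
def Qfun (f : ℝ → ℝ) (x : ℝ) : ℝ := deriv f x * (1 - x) / (1 - f x)

/-- Iterated inverse `f_n^{(-1)} = f_{n-1}^{(-1)} ∘ ⋯ ∘ f_0^{(-1)}`, the inverse of the
composition `f_n = f_0 ∘ f_1 ∘ ⋯ ∘ f_{n-1}`, built from the inverses `g i = f_i⁻¹`. -/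
def fCompInv (g : ℕ → ℝ → ℝ) : ℕ → ℝ → ℝ
  | 0, t => t
  | n + 1, t => g n (fCompInv g n t)


/-- `F` is a mixture of monomials with nonnegative weights of total mass one. -/
def IsMix (F : ℝ → ℝ) : Prop :=
  ∃ (ι : Type) (w : ι → ℝ) (e : ι → ℕ), (∀ i, 0 ≤ w i) ∧ HasSum w 1 ∧
    ∀ x ∈ Set.Icc (0 : ℝ) 1, HasSum (fun i => w i * x ^ e i) (F x)

theorem IsPGF.isMix {f : ℝ → ℝ} (h : IsPGF f) : IsMix f := by
  obtain ⟨p, h0, -, -, h1, h2⟩ := h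
  exact ⟨ℕ, p, id, h0, h1, h2⟩

theorem IsMix.mul {F G : ℝ → ℝ} (hF : IsMix F) (hG : IsMix G) :
    IsMix (fun x => F x * G x) := by
  obtain ⟨ι, w, e, h0, h1, h2⟩ := hF
  obtain ⟨κ, v, d, k0, k1, k2⟩ := hG
  refine ⟨ι × κ, fun q => w q.1 * v q.2, fun q => e q.1 + d q.2,
    fun q => mul_nonneg (h0 _) (k0 _), ?_, ?_⟩
  · have := h1.mul k1 (h1.summable.mul_of_nonneg k1.summable h0 k0)
    simpa using this
  · intro x hx
    have := (h2 x hx).mul (k2 x hx) ((h2 x hx).summable.mul_of_nonneg (k2 x hx).summable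
      (fun i => mul_nonneg (h0 i) (pow_nonneg hx.1 _))
      (fun i => mul_nonneg (k0 i) (pow_nonneg hx.1 _)))
    refine this.congr_fun ?_
    intro q
    simp only [pow_add]; ring

theorem IsMix.pow {F : ℝ → ℝ} (hF : IsMix F) (n : ℕ) : IsMix (fun x => F x ^ n) := by
  induction n with
  | zero =>
    refine ⟨Unit, fun _ => 1, fun _ => 0, fun _ => zero_le_one, ?_, ?_⟩
    · simpa using hasSum_unique (fun _ : Unit => (1 : ℝ))
    · intro x _
      simpa using hasSum_unique (fun _ : Unit => (1 : ℝ))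
  | succ n ih => simpa only [pow_succ] using ih.mul hF

theorem hasSum_sigma_nonneg {ι : Type} {κ : ι → Type} {a : (Σ i, κ i) → ℝ} {b : ι → ℝ} {c : ℝ}
    (h0 : ∀ q, 0 ≤ a q) (h1 : ∀ i, HasSum (fun k => a ⟨i, k⟩) (b i)) (h2 : HasSum b c) :
    HasSum a c := by
  have hs : Summable a := by
    rw [summable_sigma_of_nonneg h0]
    refine ⟨fun i => (h1 i).summable, ?_⟩
    simpa only [(h1 _).tsum_eq] using h2.summable
  have := hs.hasSum.sigma h1
  rw [h2.unique this]
  exact hs.hasSum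

theorem IsMix.mem {F : ℝ → ℝ} (hF : IsMix F) {x : ℝ} (hx : x ∈ Set.Icc (0 : ℝ) 1) :
    F x ∈ Set.Icc (0 : ℝ) 1 := by
  obtain ⟨ι, w, e, h0, h1, h2⟩ := hF
  refine ⟨(h2 x hx).nonneg fun i => mul_nonneg (h0 i) (pow_nonneg hx.1 _),
    hasSum_le (fun i => ?_) (h2 x hx) h1⟩
  exact mul_le_of_le_one_right (h0 i) (pow_le_one₀ hx.1 hx.2)

theorem IsMix.mono {F : ℝ → ℝ} (hF : IsMix F) {x y : ℝ} (hx : x ∈ Set.Icc (0 : ℝ) 1)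
    (hy : y ∈ Set.Icc (0 : ℝ) 1) (hxy : x ≤ y) : F x ≤ F y := by
  obtain ⟨ι, w, e, h0, h1, h2⟩ := hF
  exact hasSum_le (fun i => mul_le_mul_of_nonneg_left (pow_le_pow_left₀ hx.1 hxy _) (h0 i))
    (h2 x hx) (h2 y hy)

theorem IsMix.one {F : ℝ → ℝ} (hF : IsMix F) : F 1 = 1 := by
  obtain ⟨ι, w, e, h0, h1, h2⟩ := hF
  have := h2 1 (by simp)
  simp only [one_pow, mul_one] at this
  exact this.unique h1

theorem IsMix.comp {F G : ℝ → ℝ} (hF : IsMix F) (hG : IsMix G) :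
    IsMix (fun x => F (G x)) := by
  have hGm := fun x hx => hG.mem (x := x) hx
  obtain ⟨ι, w, e, h0, h1, h2⟩ := hF
  choose κ v d k0 k1 k2 using fun i => hG.pow (e i)
  refine ⟨Σ i, κ i, fun q => w q.1 * v q.1 q.2, fun q => d q.1 q.2,
    fun q => mul_nonneg (h0 _) (k0 _ _), ?_, ?_⟩
  · refine hasSum_sigma_nonneg (fun q => mul_nonneg (h0 _) (k0 _ _)) (b := w) (fun i => ?_) h1
    simpa using (k1 i).mul_left (w i)
  · intro x hx
    refine hasSum_sigma_nonneg
      (fun q => mul_nonneg (mul_nonneg (h0 _) (k0 _ _)) (pow_nonneg hx.1 _))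
      (fun i => ?_) (h2 (G x) (hGm x hx))
    simpa only [mul_assoc] using (k2 i x hx).mul_left (w i)

/-- Jensen: `f (y^l) ≤ (f y)^l`. -/
theorem IsMix.rpow_le {F : ℝ → ℝ} (hF : IsMix F) {y l : ℝ} (hy : y ∈ Set.Icc (0 : ℝ) 1)
    (hFy : 0 < F y) (hl0 : 0 ≤ l) (hl1 : l ≤ 1) : F (y ^ l) ≤ F y ^ l := by
  obtain ⟨ι, w, e, h0, h1, h2⟩ := hF
  have hyl : y ^ l ∈ Set.Icc (0 : ℝ) 1 :=
    ⟨Real.rpow_nonneg hy.1 _, Real.rpow_le_one hy.1 hy.2 hl0⟩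
  have hA : HasSum (fun i => F y ^ l * ((1 - l) * w i + l / F y * (w i * y ^ e i)))
      (F y ^ l * ((1 - l) * 1 + l / F y * F y)) :=
    ((h1.mul_left _).add ((h2 y hy).mul_left _)).mul_left _
  have hE : F y ^ l * ((1 - l) * 1 + l / F y * F y) = F y ^ l := by
    field_simp; ring
  rw [hE] at hA
  refine hasSum_le (fun i => ?_) (h2 _ hyl) hA
  have hB := rpow_one_add_le_one_add_mul_self (s := y ^ e i / F y - 1) (p := l)
    (by have := div_nonneg (pow_nonneg hy.1 (e i)) hFy.le; linarith) hl0 hl1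
  rw [add_sub_cancel, Real.div_rpow (pow_nonneg hy.1 _) hFy.le,
    div_le_iff₀ (Real.rpow_pos_of_pos hFy _)] at hB
  have hC : (y ^ l) ^ e i = (y ^ e i) ^ l := by
    rw [← Real.rpow_natCast, ← Real.rpow_natCast, ← Real.rpow_mul hy.1, ← Real.rpow_mul hy.1,
      mul_comm]
  rw [hC]
  calc w i * (y ^ e i) ^ l ≤ w i * ((1 + l * (y ^ e i / F y - 1)) * F y ^ l) :=
        mul_le_mul_of_nonneg_left hB (h0 i)
    _ = _ := by ring

/-- The key inequality. -/
theorem IsMix.key {F : ℝ → ℝ} (hF : IsMix F) {z η : ℝ} (m : ℕ) (hz : z ∈ Set.Icc (0 : ℝ) 1)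
    (hη : 0 < η) :
    η ^ m * (F z - F (z ^ m)) ≤ η ^ m * η + (F (z ^ m) - F ((z ^ m) ^ 2)) := by
  obtain ⟨ι, w, e, h0, h1, h2⟩ := hF
  have hzm : z ^ m ∈ Set.Icc (0 : ℝ) 1 := ⟨pow_nonneg hz.1 _, pow_le_one₀ hz.1 hz.2⟩
  have hzm2 : (z ^ m) ^ 2 ∈ Set.Icc (0 : ℝ) 1 := ⟨pow_nonneg hzm.1 _, pow_le_one₀ hzm.1 hzm.2⟩
  have hL := ((h2 z hz).sub (h2 _ hzm)).mul_left (η ^ m)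
  have hR := (h1.mul_left (η ^ m * η)).add ((h2 _ hzm).sub (h2 _ hzm2))
  rw [mul_one] at hR
  refine hasSum_le (fun i => ?_) hL hR
  obtain ⟨v, hv⟩ : ∃ v, v = z ^ e i := ⟨_, rfl⟩
  have hv0 : 0 ≤ v := hv ▸ pow_nonneg hz.1 _
  have hv1 : v ≤ 1 := hv ▸ pow_le_one₀ hz.1 hz.2
  have e1 : (z ^ m) ^ e i = v ^ m := by rw [hv, ← pow_mul, ← pow_mul, mul_comm]
  have e2 : ((z ^ m) ^ 2) ^ e i = (v ^ m) ^ 2 := by rw [← e1, ← pow_mul, ← pow_mul _ _ 2, mul_comm]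
  rw [e1, e2, ← hv]
  have hvm0 : 0 ≤ v ^ m := pow_nonneg hv0 _
  have hvm1 : v ^ m ≤ 1 := pow_le_one₀ hv0 hv1
  have hD : 0 < η ^ m := pow_pos hη m
  have hp : η ^ m * (v - v ^ m) ≤ η ^ m * η + (v ^ m - (v ^ m) ^ 2) := by
    rcases le_total v η with h | h
    · nlinarith [mul_nonneg hvm0 (sub_nonneg.2 hvm1), mul_nonneg hD.le hvm0]
    · have : η ^ m ≤ v ^ m := pow_le_pow_left₀ hη.le h m
      nlinarith [mul_nonneg (sub_nonneg.2 this) (sub_nonneg.2 hvm1), mul_nonneg hD.le hη.le,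
        mul_nonneg hD.le (sub_nonneg.2 hv1)]
  nlinarith [mul_le_mul_of_nonneg_left hp (h0 i)]

theorem exp_neg_hfun {f g : ℝ → ℝ} (hf : IsPGF f) (hg : IsInvOn01 g f) {s : ℝ} (hs : 0 ≤ s) :
    Real.exp (-hfun g s) = g (Real.exp (-s)) ∧ f (Real.exp (-hfun g s)) = Real.exp (-s) ∧
      0 ≤ hfun g s := by
  have hm : Real.exp (-s) ∈ Set.Icc (0 : ℝ) 1 :=
    ⟨(Real.exp_pos _).le, Real.exp_le_one_iff.2 (by linarith)⟩
  obtain ⟨-, h2, h3⟩ := hg _ hm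
  have hf0 : f 0 = 0 := by
    obtain ⟨p, -, hp0, -, -, hp⟩ := hf
    have h := hp 0 (by simp)
    have : (fun j => p j * (0 : ℝ) ^ j) = fun _ => 0 := by
      funext j
      cases j with
      | zero => simp [hp0]
      | succ j => simp
    rw [this] at h
    exact h.unique hasSum_zero
  have hpos : 0 < g (Real.exp (-s)) := by
    rcases h3.1.eq_or_lt with h | h
    · rw [← h, hf0] at h2
      exact absurd h2 (Real.exp_pos _).ne
    · exact h
  have he : Real.exp (-hfun g s) = g (Real.exp (-s)) := by
    rw [hfun, neg_neg, Real.exp_log hpos]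
  refine ⟨he, by rw [he, h2], ?_⟩
  rw [hfun]
  have := Real.log_nonpos h3.1 h3.2
  linarith

/-- Composition of the first `n` generating functions. -/
def fComp (f : ℕ → ℝ → ℝ) : ℕ → ℝ → ℝ
  | 0, x => x
  | n + 1, x => fComp f n (f n x)

section
variable {f g : ℕ → ℝ → ℝ}

theorem isMix_fComp (hf : ∀ i, IsPGF (f i)) (n : ℕ) : IsMix (fComp f n) := by
  induction n with
  | zero =>
    refine ⟨Unit, fun _ => 1, fun _ => 1, fun _ => zero_le_one, ?_, ?_⟩
    · simpa using hasSum_unique (fun _ : Unit => (1 : ℝ))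
    · intro x _
      simpa [fComp] using hasSum_unique (fun _ : Unit => x)
  | succ n ih => exact ih.comp (hf n).isMix

theorem hIter_aux (hf : ∀ i, IsPGF (f i)) (hg : ∀ i, IsInvOn01 (g i) (f i)) {s : ℝ} (hs : 0 ≤ s)
    (n : ℕ) : 0 ≤ hIter g n s ∧ fComp f n (Real.exp (-hIter g n s)) = Real.exp (-s) := by
  induction n with
  | zero => exact ⟨hs, rfl⟩
  | succ n ih =>
    obtain ⟨-, h2, h3⟩ := exp_neg_hfun (hf n) (hg n) ih.1
    refine ⟨h3, ?_⟩
    simp only [fComp, hIter]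
    rw [h2, ih.2]

theorem exp_mem {x : ℝ} (hx : 0 ≤ x) : Real.exp (-x) ∈ Set.Icc (0 : ℝ) 1 :=
  ⟨(Real.exp_pos _).le, Real.exp_le_one_iff.2 (by linarith)⟩

theorem hIter_pos (hf : ∀ i, IsPGF (f i)) (hg : ∀ i, IsInvOn01 (g i) (f i)) {s : ℝ} (hs : 0 < s)
    (n : ℕ) : 0 < hIter g n s := by
  obtain ⟨h1, h2⟩ := hIter_aux hf hg hs.le n
  rcases h1.eq_or_lt with h | h
  · rw [← h, neg_zero, Real.exp_zero, (isMix_fComp hf n).one] at h2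
    have := Real.exp_lt_one_iff.2 (show -s < 0 by linarith)
    linarith
  · exact h

theorem hIter_mono (hf : ∀ i, IsPGF (f i)) (hg : ∀ i, IsInvOn01 (g i) (f i)) {s t : ℝ}
    (hs : 0 ≤ s) (hst : s ≤ t) (n : ℕ) : hIter g n s ≤ hIter g n t := by
  rcases hst.eq_or_lt with rfl | hst
  · exact le_rfl
  obtain ⟨h1, h2⟩ := hIter_aux hf hg hs n
  obtain ⟨k1, k2⟩ := hIter_aux hf hg (hs.trans hst.le) n
  by_contra! hc
  have := (isMix_fComp hf n).mono (exp_mem h1) (exp_mem k1) (Real.exp_le_exp.2 (neg_le_neg hc.le))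
  rw [h2, k2, Real.exp_le_exp] at this
  linarith

theorem hfun_ratio {f g : ℝ → ℝ} (hf : IsPGF f) (hg : IsInvOn01 g f) {u t : ℝ} (hu : 0 < u)
    (hut : u ≤ t) : hfun g u * t ≤ u * hfun g t := by
  have ht : 0 < t := hu.trans_le hut
  obtain ⟨a1, a2, a3⟩ := exp_neg_hfun hf hg hu.le
  obtain ⟨b1, b2, b3⟩ := exp_neg_hfun hf hg ht.le
  have hl0 : 0 ≤ u / t := (div_pos hu ht).le
  have hJ := hf.isMix.rpow_le (exp_mem b3) (by rw [b2]; exact Real.exp_pos _) hl0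
    ((div_le_one ht).2 hut)
  rw [b2, ← Real.exp_mul, ← Real.exp_mul] at hJ
  have e1 : -t * (u / t) = -u := by field_simp
  have e2 : -hfun g t * (u / t) = -(hfun g t * (u / t)) := by ring
  have hw : 0 ≤ hfun g t * (u / t) := mul_nonneg b3 hl0
  rw [e1, e2] at hJ
  have hle : hfun g u ≤ hfun g t * (u / t) := by
    by_contra! hc
    have h3 := hf.isMix.mono (exp_mem a3) (exp_mem hw) (Real.exp_le_exp.2 (neg_le_neg hc.le))
    rw [a2] at h3
    have h4 := le_antisymm h3 hJ
    have h5 := (hg _ (exp_mem hw)).1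
    rw [← h4, ← a1] at h5
    have := Real.exp_injective h5
    linarith
  calc hfun g u * t ≤ hfun g t * (u / t) * t := mul_le_mul_of_nonneg_right hle ht.le
    _ = _ := by field_simp

theorem ratio_antitone (hf : ∀ i, IsPGF (f i)) (hg : ∀ i, IsInvOn01 (g i) (f i)) {u t : ℝ}
    (hu : 0 < u) (hut : u ≤ t) : Antitone fun n => hIter g n u / hIter g n t := by
  refine antitone_nat_of_succ_le fun n => ?_
  have ht : 0 < t := hu.trans_le hut
  rw [div_le_div_iff₀ (hIter_pos hf hg ht _) (hIter_pos hf hg ht _)]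
  exact hfun_ratio (hf n) (hg n) (hIter_pos hf hg hu n) (hIter_mono hf hg hu.le hut n)

theorem tendsto_of_small (hf : ∀ i, IsPGF (f i)) (hg : ∀ i, IsInvOn01 (g i) (f i)) {u t : ℝ}
    (hu : 0 < u) (hut : u ≤ t) (h : ∀ δ > 0, ∃ n, hIter g n u / hIter g n t < δ) :
    Tendsto (fun n => hIter g n u / hIter g n t) atTop (𝓝 0) := by
  rw [Metric.tendsto_atTop]
  intro δ hδ
  obtain ⟨N, hN⟩ := h δ hδ
  refine ⟨N, fun n hn => ?_⟩
  have h0 := div_pos (hIter_pos hf hg hu n) (hIter_pos hf hg (hu.trans_le hut) n)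
  rw [Real.dist_eq, sub_zero, abs_of_pos h0]
  exact (ratio_antitone hf hg hu hut hn).trans_lt hN

theorem open_class (hf : ∀ i, IsPGF (f i)) (hg : ∀ i, IsInvOn01 (g i) (f i)) {u t : ℝ}
    (hu : 0 < u) (hut : u < t) (m : ℕ) (hm : 0 < m) :
    ∃ r > t, ∀ n, hIter g n t ≤ m * hIter g n u → hIter g n r ≤ 2 * hIter g n t := by
  have ht := hu.trans hut
  obtain ⟨η, hη⟩ : ∃ η, η = (Real.exp (-u) - Real.exp (-t)) / 2 := ⟨_, rfl⟩
  have hη0 : 0 < η := by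
    have : Real.exp (-t) < Real.exp (-u) := Real.exp_lt_exp.2 (by linarith)
    rw [hη]; linarith
  have hD : 0 < η ^ m := pow_pos hη0 m
  have hε : 0 < η ^ m * η := mul_pos hD hη0
  refine ⟨t + η ^ m * η / 2, by linarith, fun n hn => ?_⟩
  obtain ⟨r, hr⟩ : ∃ r, r = t + η ^ m * η / 2 := ⟨_, rfl⟩
  rw [← hr]
  have hr0 : 0 < r := by linarith
  have hrt : Real.exp (-t) - η ^ m * η < Real.exp (-r) := by
    have e1 : Real.exp (-r) = Real.exp (-t) * Real.exp (-(η ^ m * η / 2)) := by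
      rw [← Real.exp_add, hr]; ring_nf
    have e2 := Real.add_one_le_exp (-(η ^ m * η / 2))
    have e3 := (exp_mem ht.le).2
    have e4 := mul_le_mul_of_nonneg_left e2 (Real.exp_pos (-t)).le
    rw [e1]
    nlinarith
  obtain ⟨a1, a2⟩ := hIter_aux hf hg hu.le n
  obtain ⟨b1, b2⟩ := hIter_aux hf hg ht.le n
  obtain ⟨c1, c2⟩ := hIter_aux hf hg hr0.le n
  have hF := isMix_fComp hf n
  have hm' : (0 : ℝ) < m := by exact_mod_cast hm
  have hz0 : 0 ≤ hIter g n t / m := div_nonneg b1 hm'.le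
  have hzu : hIter g n t / m ≤ hIter g n u := by
    rw [div_le_iff₀ hm']; linarith
  have hk := hF.key m (exp_mem hz0) hη0
  have e1 : Real.exp (-(hIter g n t / m)) ^ m = Real.exp (-hIter g n t) := by
    rw [← Real.exp_nat_mul]; congr 1; field_simp
  have e2 : Real.exp (-hIter g n t) ^ 2 = Real.exp (-(2 * hIter g n t)) := by
    rw [← Real.exp_nat_mul]; congr 1; push_cast; ring
  rw [e1, e2, b2] at hk
  have hmz := hF.mono (exp_mem a1) (exp_mem hz0) (Real.exp_le_exp.2 (neg_le_neg hzu))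
  rw [a2] at hmz
  by_contra! hc
  have hlast := hF.mono (exp_mem c1) (exp_mem (x := 2 * hIter g n t) (by linarith))
    (Real.exp_le_exp.2 (neg_le_neg hc.le))
  rw [c2] at hlast
  have h6 := mul_le_mul_of_nonneg_left (sub_le_sub_right hmz (Real.exp (-t))) hD.le
  have h7 : Real.exp (-u) - Real.exp (-t) = 2 * η := by rw [hη]; ring
  rw [h7] at h6
  linarith

theorem exists_regular_aux (hf : ∀ i, IsPGF (f i)) (hg : ∀ i, IsInvOn01 (g i) (f i)) {a s : ℝ}
    (hs : 0 < s) (hd : Tendsto (fun n => hIter g n a / hIter g n s) atTop (𝓝 0)) :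
    ∃ sr ∈ Set.Icc a s, AnalyticRegular g sr := by
  have hlt : ∀ r, Tendsto (fun n => hIter g n r / hIter g n s) atTop (𝓝 0) → r < s := by
    intro r hr
    by_contra! hc
    have : (1 : ℝ) ≤ 0 := ge_of_tendsto' hr fun n =>
      (one_le_div (hIter_pos hf hg hs n)).2 (hIter_mono hf hg hs.le hc n)
    linarith
  obtain ⟨S, hS⟩ : ∃ S, S = {u : ℝ | Tendsto (fun n => hIter g n u / hIter g n s) atTop (𝓝 0)} :=
    ⟨_, rfl⟩
  have haS : a ∈ S := by rw [hS]; exact hd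
  have hbS : ∀ r ∈ S, r ≤ s := fun r hr => (hlt r (by rw [hS] at hr; exact hr)).le
  have hbdd : BddAbove S := ⟨s, hbS⟩
  refine ⟨sSup S, ⟨le_csSup hbdd haS, csSup_le ⟨a, haS⟩ hbS⟩, ?_⟩
  intro u hu huc
  have hc0 : 0 < sSup S := hu.trans huc
  refine tendsto_of_small hf hg hu huc.le ?_
  by_contra! hcon
  obtain ⟨δ, hδ, hδn⟩ := hcon
  obtain ⟨m, hm⟩ := exists_nat_gt (1 / δ)
  have hm0 : (0 : ℝ) < m := (one_div_pos.2 hδ).trans hm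
  obtain ⟨r, hr, hrn⟩ := open_class hf hg hu huc m (by exact_mod_cast hm0)
  obtain ⟨v, hvS, huv⟩ := exists_lt_of_lt_csSup ⟨a, haS⟩ huc
  have hmu : ∀ n, hIter g n (sSup S) ≤ m * hIter g n u := by
    intro n
    have h1 := hδn n
    rw [le_div_iff₀ (hIter_pos hf hg hc0 n)] at h1
    have h2 : 1 < m * δ := by rwa [div_lt_iff₀ hδ] at hm
    have h3 := mul_le_mul_of_nonneg_left h1 hm0.le
    nlinarith [hIter_pos hf hg hc0 n]
  have hv : Tendsto (fun n => hIter g n v / hIter g n s) atTop (𝓝 0) := by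
    rw [hS] at hvS; exact hvS
  have hrS : r ∈ S := by
    rw [hS]
    have hv' := hv.const_mul (2 * (m : ℝ))
    rw [mul_zero] at hv'
    refine squeeze_zero (fun n => ?_) (fun n => ?_) hv'
    · exact (div_pos (hIter_pos hf hg (hc0.trans hr) n) (hIter_pos hf hg hs n)).le
    · rw [← mul_div_assoc]
      refine div_le_div_of_nonneg_right ?_ (hIter_pos hf hg hs n).le
      have h1 := hrn n (hmu n)
      have h2 := hmu n
      have h3 := mul_le_mul_of_nonneg_left (hIter_mono hf hg hu.le huv.le n) hm0.le
      linarith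
  exact absurd (le_csSup hbdd hrS) (not_le.2 hr)

end

/-- If `d(s) = lim_n h_n(θ, h_0(s))/h_n(θ, s) = 0` for every
`s ∈ (0,∞)`, then every interval `[h_0(s), s]` contains at least one point that is
regular for the shifted sequence `(f (1+i))`. -/
theorem exists_regular_point_in_interval
    (f g : ℕ → ℝ → ℝ) (hf : ∀ i, IsPGF (f i)) (hg : ∀ i, IsInvOn01 (g i) (f i))
    (hd : ∀ s : ℝ, 0 < s →
      Tendsto (fun n => hIter (fun i => g (1 + i)) n (hfun (g 0) s)
        / hIter (fun i => g (1 + i)) n s) atTop (𝓝 0)) :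
    ∀ s : ℝ, 0 < s → ∃ sr ∈ Set.Icc (hfun (g 0) s) s,
      AnalyticRegular (fun i => g (1 + i)) sr := by
  intro s hs
  exact exists_regular_aux (f := fun i => f (1 + i)) (fun i => hf _) (fun i => hg _) hs (hd s hs)

end
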